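/- Let ℓ be an integer with ℓ ≠ 0 and ℓ ≠ 1, and set m = 3ℓ(1−ℓ). Then the Weierstrass curve E over ℚ given by the affine equation V² = U³ + (4−2m)·U² + m²·U has nonzero discriminant (so E is an elliptic curve), the pair P = (9(2ℓ−1)²/4, 9(2ℓ−1)(16ℓ²−16ℓ+5)/8) is a rational affine point of E, and P has infinite order in the group of rational points of E, i.e. n • P ≠ 0 for every positive integer n. In particular E has infinitely many rational points. -/

import Mathlib

/-- The abscissa has the form `a / (4^k b)` with `a, b` odd integers. -/
def GoodX (k : ℕ) (x : ℚ) : Prop :=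
  ∃ a b : ℤ, Odd a ∧ Odd b ∧ x * (4 ^ k * b) = a

lemma GoodX.unique_lt {j k : ℕ} {x : ℚ} (hj : GoodX j x) (hk : GoodX k x) : ¬ j < k := by
  intro hlt
  obtain ⟨a, b, ha, hb, h1⟩ := hj
  obtain ⟨c, d, hc, hd, h2⟩ := hk
  obtain ⟨e, rfl⟩ := Nat.exists_eq_add_of_lt hlt
  have h3 : (a : ℚ) * (4 ^ (e + 1) * d) = c * b := by
    rw [← h1, ← h2]; ring
  have h4 : a * (4 ^ (e + 1) * d) = c * b := by exact_mod_cast h3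
  have h5 : Odd (c * b) := hc.mul hb
  rw [← h4] at h5
  have h6 : Even (a * (4 ^ (e + 1) * d)) := ⟨a * (2 * 4 ^ e * d), by ring⟩
  exact (Int.not_even_iff_odd.mpr h5) h6

/-- Doubling raises the level by one. -/
lemma double_step (M A : ℤ) (W : WeierstrassCurve.Affine ℚ)
    (hW : W = { a₁ := 0, a₂ := (A : ℚ), a₃ := 0, a₄ := (M : ℚ) ^ 2, a₆ := 0 })
    (k : ℕ) (hk : 0 < k) (x y : ℚ) (h : W.Nonsingular x y) (hx : GoodX k x) :
    ∃ x' y', ∃ h' : W.Nonsingular x' y',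
      WeierstrassCurve.Affine.Point.some x y h + WeierstrassCurve.Affine.Point.some x y h
        = WeierstrassCurve.Affine.Point.some x' y' h' ∧ GoodX (k + 1) x' := by
  obtain ⟨a, b, ha, hb, hab⟩ := hx
  have heq : y ^ 2 = x ^ 3 + A * x ^ 2 + M ^ 2 * x := by
    have := (WeierstrassCurve.Affine.equation_iff x y).mp h.1
    subst hW
    simpa using this
  have h4 : Even ((4 : ℤ) ^ k) := by
    obtain ⟨e, rfl⟩ := Nat.exists_eq_succ_of_ne_zero hk.ne'
    exact ⟨2 * 4 ^ e, by rw [pow_succ]; ring⟩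
  have hb0 : (b : ℚ) ≠ 0 := by
    intro h0
    have : b = 0 := by exact_mod_cast h0
    subst this; simp at hb
  -- odd numerators
  have hN : Odd (a ^ 2 - M ^ 2 * (4 ^ k * b) ^ 2) := by
    refine (ha.pow).sub_even ?_
    have : Even ((4 ^ k * b) ^ 2 : ℤ) := (h4.mul_right b).pow_of_ne_zero two_ne_zero
    exact this.mul_left _
  have hD : Odd (a * (a ^ 2 + (A * a * (4 ^ k * b) + M ^ 2 * (4 ^ k * b) ^ 2))) := by
    refine ha.mul ((ha.pow).add_even ?_)
    have h2 : Even (4 ^ k * b) := h4.mul_right b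
    exact (h2.mul_left _).add ((h2.pow_of_ne_zero two_ne_zero).mul_left _)
  set c : ℚ := 4 ^ k * b with hc
  have hc0 : c ≠ 0 := mul_ne_zero (by positivity) hb0
  have hxa : x = a / c := by rw [eq_div_iff hc0, hab]
  have hDq : y ^ 2 * c ^ 3 = ((a * (a ^ 2 + (A * a * (4 ^ k * b) + M ^ 2 * (4 ^ k * b) ^ 2)) : ℤ) : ℚ) := by
    push_cast
    rw [← hc, ← hab, heq]; ring
  have hNq : (x ^ 2 - M ^ 2) * c ^ 2 = ((a ^ 2 - M ^ 2 * (4 ^ k * b) ^ 2 : ℤ) : ℚ) := by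
    push_cast
    rw [← hc, ← hab]; ring
  have hy0 : y ≠ 0 := by
    rintro rfl
    have h0 : ((a * (a ^ 2 + (A * a * (4 ^ k * b) + M ^ 2 * (4 ^ k * b) ^ 2)) : ℤ) : ℚ) = 0 := by
      rw [← hDq]; simp
    have h1 := Int.cast_eq_zero.mp h0
    rw [h1] at hD
    simp at hD
  have hyn : y ≠ W.negY x y := by
    subst hW
    simp only [WeierstrassCurve.Affine.negY]
    intro h0
    apply hy0
    linarith
  rw [WeierstrassCurve.Affine.Point.add_self_of_Y_ne hyn]
  refine ⟨_, _, _, rfl, _, _, hN.pow (n := 2), hb.mul hD, ?_⟩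
  rw [WeierstrassCurve.Affine.slope_of_Y_ne rfl hyn]
  rw [Int.cast_pow, Int.cast_mul, ← hNq, ← hDq]
  subst hW
  simp only [WeierstrassCurve.Affine.addX, WeierstrassCurve.Affine.negY]
  have h2 : y - (-y - 0 * x - 0) = 2 * y := by ring
  rw [h2]
  have e1 : (4 : ℚ) ^ (k + 1) * (b * (y ^ 2 * c ^ 3)) = 4 * y ^ 2 * c ^ 4 := by
    rw [hc]; ring
  rw [e1]
  field_simp
  linear_combination (-32 * x - 16 * A) * heq


/-- Let `ℓ` be an integer with `ℓ ≠ 0` and `ℓ ≠ 1`, and set `m = 3ℓ(1−ℓ)`.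
Then the Weierstrass curve `E : V² = U³ + (4−2m)U² + m²U` over `ℚ` has nonzero discriminant,
the point `P = (9(2ℓ−1)²/4, 9(2ℓ−1)(16ℓ²−16ℓ+5)/8)` is a nonsingular rational point on `E`
of infinite order, and `E` has infinitely many rational points. -/
theorem stmt0 (ℓ : ℤ) (hℓ0 : ℓ ≠ 0) (hℓ1 : ℓ ≠ 1)
    (m : ℚ) (hm : m = 3 * (ℓ : ℚ) * (1 - (ℓ : ℚ)))
    (W : WeierstrassCurve.Affine ℚ)
    (hW : W = { a₁ := 0, a₂ := 4 - 2 * m, a₃ := 0, a₄ := m ^ 2, a₆ := 0 }) :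
    W.Δ ≠ 0 ∧
    ∃ h : W.Nonsingular (9 * (2 * (ℓ : ℚ) - 1) ^ 2 / 4)
        (9 * (2 * (ℓ : ℚ) - 1) * (16 * (ℓ : ℚ) ^ 2 - 16 * (ℓ : ℚ) + 5) / 8),
      (∀ n : ℕ, 0 < n →
        n • (WeierstrassCurve.Affine.Point.some _ _ h) ≠ (0 : W.Point)) ∧
      Infinite W.Point := by
  have hodd : ∀ r : ℤ, 2 * r - 1 ≠ 0 := fun r => by omega
  set M : ℤ := 3 * ℓ * (1 - ℓ) with hM
  have hmM : m = (M : ℚ) := by rw [hm, hM]; push_cast; ring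
  have hM0 : M ≠ 0 := by
    rw [hM]
    exact mul_ne_zero (mul_ne_zero (by norm_num) hℓ0) (fun h => hℓ1 (by omega))
  have hM1 : M ≠ 1 := by
    intro h
    have : (3 : ℤ) ∣ 1 := ⟨ℓ * (1 - ℓ), by linarith⟩
    norm_num at this
  have hW' : W = { a₁ := 0, a₂ := ((4 - 2 * M : ℤ) : ℚ), a₃ := 0, a₄ := (M : ℚ) ^ 2, a₆ := 0 } := by
    rw [hW, hmM]; push_cast; rfl
  have hΔ : W.Δ ≠ 0 := by
    have e : W.Δ = 256 * m ^ 4 * (1 - m) := by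
      rw [hW]
      simp only [WeierstrassCurve.Δ, WeierstrassCurve.b₂, WeierstrassCurve.b₄,
        WeierstrassCurve.b₆, WeierstrassCurve.b₈]
      ring
    have h0 : m ≠ 0 := by rw [hmM]; exact_mod_cast hM0
    have h1 : m ≠ 1 := by rw [hmM]; exact_mod_cast hM1
    rw [e]
    exact mul_ne_zero (mul_ne_zero (by norm_num) (pow_ne_zero _ h0)) (sub_ne_zero.mpr h1.symm)
  refine ⟨hΔ, ?_⟩
  have hns : W.Nonsingular (9 * (2 * (ℓ : ℚ) - 1) ^ 2 / 4)
        (9 * (2 * (ℓ : ℚ) - 1) * (16 * (ℓ : ℚ) ^ 2 - 16 * (ℓ : ℚ) + 5) / 8) := by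
    refine (WeierstrassCurve.Affine.equation_iff_nonsingular_of_Δ_ne_zero hΔ).mp ?_
    rw [WeierstrassCurve.Affine.equation_iff]
    subst hW
    simp only
    rw [hm]
    ring
  refine ⟨hns, ?_⟩
  set P := WeierstrassCurve.Affine.Point.some _ _ hns with hP
  have key : ∀ k : ℕ, ∃ x y, ∃ h : W.Nonsingular x y,
      (2 ^ k) • P = WeierstrassCurve.Affine.Point.some x y h ∧ GoodX (k + 1) x := by
    intro k
    induction k with
    | zero =>
      refine ⟨_, _, hns, by rw [pow_zero, one_smul], 9 * (2 * ℓ - 1) ^ 2, 1, ?_, odd_one, ?_⟩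
      · exact Odd.mul (by decide) (Odd.pow ⟨ℓ - 1, by ring⟩)
      · push_cast; ring
    | succ k ih =>
      obtain ⟨x, y, h, e, g⟩ := ih
      obtain ⟨x', y', h', e', g'⟩ := double_step M _ W hW' (k + 1) k.succ_pos x y h g
      refine ⟨x', y', h', ?_, g'⟩
      rw [pow_succ, mul_comm, mul_smul, e, two_smul, e']
  have hinj : Function.Injective (fun k : ℕ => (2 ^ k) • P) := by
    intro i j hij
    obtain ⟨x, y, h, e, g⟩ := key i
    obtain ⟨x', y', h', e', g'⟩ := key j
    have hij' : (2 ^ i) • P = (2 ^ j) • P := hij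
    rw [e, e'] at hij'
    have hx : x = x' := (WeierstrassCurve.Affine.Point.some.inj hij').1
    subst hx
    have h1 := g.unique_lt g'
    have h2 := g'.unique_lt g
    omega
  refine ⟨?_, Infinite.of_injective _ hinj⟩
  intro n hn h0
  have hfin : Set.Finite (Set.range (fun k : ℕ => (2 ^ k) • P)) := by
    refine ((Set.finite_lt_nat n).image (fun r : ℕ => r • P)).subset ?_
    rintro _ ⟨k, rfl⟩
    refine ⟨2 ^ k % n, Nat.mod_lt _ hn, ?_⟩
    change (2 ^ k % n) • P = (2 ^ k) • P
    conv_rhs => rw [← Nat.mod_add_div (2 ^ k) n, add_smul, mul_comm, mul_smul, h0, nsmul_zero, add_zero]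
  exact Set.infinite_range_of_injective hinj hfin
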